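/- Let (A, α, γ) be a graded C*-dynamical system, β ∈ ℝ, ω a γ-invariant (α, β)-KMS state with enveloping graded von Neumann algebra (M, Ω, V), where M = π(A)'' for the GNS representation (H, π, Ω). Suppose A contains a sequence (u_n) of selfadjoint unitaries invariant under the dynamics and the grading such that ω(u_n u_m) → 1 as n, m → ∞ and ‖u_n a u_n − γ(a)‖ → 0 for all a in a norm-dense α-invariant *-subalgebra A₀ of entire analytic elements. Then ρ(a) := lim_{n→∞} ω(a u_n) exists for all a ∈ A and defines a hermitian γ-twisted (α, β)-KMS functional dominated by ω, and the family of all hermitian γ-twisted (α, β)-KMS functionals dominated by ω is exactly {a ↦ ρ(a z) : z = z* ∈ Z(M), ‖z‖ ≤ 1}. -/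

import Mathlib

open scoped InnerProductSpace ComplexOrder

noncomputable section

/-- A strongly continuous one-parameter group of *-automorphisms of a unital C*-algebra. -/
structure Dynamics (A : Type*) [CStarAlgebra A] where
  α : ℝ → A ≃⋆ₐ[ℂ] A
  α_zero : ∀ a, α 0 a = a
  α_add : ∀ s t a, α (s + t) a = α s (α t a)
  α_cont : ∀ a, Continuous fun t => α t a

variable {A : Type*} [CStarAlgebra A]

/-- `f` is the entire analytic extension of `t ↦ α_t a`; an element admitting such an
extension is an entire analytic element for the dynamics. -/
def Dynamics.IsAnalyticExt (d : Dynamics A) (a : A) (f : ℂ → A) : Prop :=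
  Differentiable ℂ f ∧ ∀ t : ℝ, f (t : ℂ) = d.α t a

/-- A state: positive normalized linear functional. -/
def IsState (ω : A → ℂ) : Prop :=
  IsLinearMap ℂ ω ∧ (∀ a : A, 0 ≤ ω (star a * a)) ∧ ω 1 = 1

/-- The `(α, β)`-KMS condition: `ω (a * α_{iβ}(b)) = ω (b * a)` for entire analytic `a, b`. -/
def Dynamics.IsKMS (d : Dynamics A) (β : ℝ) (ω : A → ℂ) : Prop :=
  IsState ω ∧ ∀ a b : A, ∀ fa fb : ℂ → A, d.IsAnalyticExt a fa → d.IsAnalyticExt b fb →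
    ω (a * fb (Complex.I * β)) = ω (b * a)

/-- A graded C*-dynamical system: dynamics plus a commuting involutive grading. -/
structure GradedDyn (A : Type*) [CStarAlgebra A] extends Dynamics A where
  γ : A ≃⋆ₐ[ℂ] A
  γ_invol : ∀ a, γ (γ a) = a
  γ_comm : ∀ t a, γ (α t a) = α t (γ a)

/-- The `γ`-twisted `(α, β)`-KMS condition: `ρ (a * α_{iβ}(b)) = ρ (b * γ a)`. -/
def Dynamics.IsTwistedKMS (d : Dynamics A) (γ : A ≃⋆ₐ[ℂ] A) (β : ℝ) (ρ : A → ℂ) : Prop :=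
  IsLinearMap ℂ ρ ∧ ∀ a b : A, ∀ fa fb : ℂ → A, d.IsAnalyticExt a fa → d.IsAnalyticExt b fb →
    ρ (a * fb (Complex.I * β)) = ρ (b * γ a)

/-- Hermitian functional: `ρ(a*) = conj (ρ a)`. -/
def IsHermitian (ρ : A → ℂ) : Prop := ∀ a, ρ (star a) = starRingEnd ℂ (ρ a)

/-- `ρ` is dominated by `ω`: `|ρ(a* b)|² ≤ ω(a* a) ω(b* b)`. -/
def Dominated (ω ρ : A → ℂ) : Prop :=
  ∀ a b : A, (‖ρ (star a * b)‖ : ℂ) ^ 2 ≤ ω (star a * a) * ω (star b * b)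

/-- The set `F_β(A, α, γ, ω)`: hermitian `γ`-twisted `(α,β)`-KMS functionals dominated by `ω`. -/
def TwistedKMSDom (d : Dynamics A) (γ : A ≃⋆ₐ[ℂ] A) (β : ℝ) (ω ρ : A → ℂ) : Prop :=
  d.IsTwistedKMS γ β ρ ∧ IsHermitian ρ ∧ Dominated ω ρ

/-- Product of the `ℤ₂`-crossed product `A ⋊_γ ℤ₂` realized on `A ⊕ A`. -/
def cpMul (γ : A ≃⋆ₐ[ℂ] A) (p q : A × A) : A × A :=
  (p.1 * q.1 + p.2 * γ q.2, p.1 * q.2 + p.2 * γ q.1)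

/-- Involution of the crossed product. -/
def cpStar (γ : A ≃⋆ₐ[ℂ] A) (p : A × A) : A × A := (star p.1, γ (star p.2))

/-- Unit of the crossed product. -/
def cpOne : A × A := (1, 0)

/-- A state on the crossed product. -/
def cpIsState (γ : A ≃⋆ₐ[ℂ] A) (W : A × A → ℂ) : Prop :=
  IsLinearMap ℂ W ∧ (∀ p : A × A, 0 ≤ W (cpMul γ (cpStar γ p) p)) ∧ W (cpOne : A × A) = 1

/-- Entire analytic extension for the componentwise extended dynamics `𝛂` on `A ⊕ A`. -/
def cpIsAnalyticExt (d : Dynamics A) (p : A × A) (f : ℂ → A × A) : Prop :=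
  Differentiable ℂ f ∧ ∀ t : ℝ, f (t : ℂ) = (d.α t p.1, d.α t p.2)

/-- `(𝛂, β)`-KMS states of the crossed product `A ⋊_γ ℤ₂`. -/
def cpIsKMS (d : Dynamics A) (γ : A ≃⋆ₐ[ℂ] A) (β : ℝ) (W : A × A → ℂ) : Prop :=
  cpIsState γ W ∧ ∀ p q : A × A, ∀ fp fq : ℂ → A × A,
    cpIsAnalyticExt d p fp → cpIsAnalyticExt d q fq →
    W (cpMul γ p (fq (Complex.I * β))) = W (cpMul γ q p)


/-- The enveloping von Neumann algebra `M = π(A)''` of a representation `π`. -/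
def envVN {A : Type*} [CStarAlgebra A]
    {Hs : Type*} [NormedAddCommGroup Hs] [InnerProductSpace ℂ Hs] [CompleteSpace Hs]
    (π : A →⋆ₐ[ℂ] (Hs →L[ℂ] Hs)) : Set (Hs →L[ℂ] Hs) :=
  Set.centralizer (Set.centralizer (Set.range fun a => π a))

/-- The center `Z(π(A)'')`. -/
def envCenter {A : Type*} [CStarAlgebra A]
    {Hs : Type*} [NormedAddCommGroup Hs] [InnerProductSpace ℂ Hs] [CompleteSpace Hs]
    (π : A →⋆ₐ[ℂ] (Hs →L[ℂ] Hs)) : Set (Hs →L[ℂ] Hs) :=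
  envVN π ∩ Set.centralizer (envVN π)

section helpers

open Filter Topology

theorem aux_entire_eq {E : Type*} [NormedAddCommGroup E] [NormedSpace ℂ E] [CompleteSpace E]
    {f g : ℂ → E} (hf : Differentiable ℂ f) (hg : Differentiable ℂ g)
    (h : ∀ t : ℝ, f t = g t) : f = g := by
  have hf' : AnalyticOnNhd ℂ f Set.univ := fun x _ => hf.analyticAt x
  have hg' : AnalyticOnNhd ℂ g Set.univ := fun x _ => hg.analyticAt x
  refine hf'.eq_of_frequently_eq hg' (z₀ := 0) ?_
  have ht : Tendsto (fun n : ℕ => ((1 / ((n : ℝ) + 1) : ℝ) : ℂ)) atTop (𝓝[≠] 0) := by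
    refine tendsto_nhdsWithin_iff.2 ⟨?_, ?_⟩
    · have := (Complex.continuous_ofReal.tendsto 0).comp
        (tendsto_one_div_add_atTop_nhds_zero_nat (𝕜 := ℝ))
      simp only [Complex.ofReal_zero] at this
      exact this
    · refine Eventually.of_forall fun n => ?_
      have : (1 / ((n : ℝ) + 1)) ≠ 0 := by positivity
      exact fun h0 => this (Complex.ofReal_eq_zero.1 h0)
  exact ht.frequently (Frequently.of_forall fun n => h _)

theorem aux_norm_alpha (d : Dynamics A) (t : ℝ) (a : A) : ‖d.α t a‖ = ‖a‖ :=
  StarAlgEquiv.norm_map (d.α t) a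

theorem aux_isom (e : A ≃⋆ₐ[ℂ] A) : Isometry e :=
  AddMonoidHomClass.isometry_of_norm e (fun a => StarAlgEquiv.norm_map e a)

theorem aux_diff_comp (e : A ≃⋆ₐ[ℂ] A) {f : ℂ → A} (hf : Differentiable ℂ f) :
    Differentiable ℂ (fun z => e (f z)) := by
  let L : A →L[ℂ] A := ⟨(e.toAlgEquiv.toLinearMap), (aux_isom e).continuous⟩
  exact L.differentiable.comp hf

theorem aux_ext_shift (d : Dynamics A) {a : A} {f : ℂ → A} (h : d.IsAnalyticExt a f) (w : ℂ) :
    d.IsAnalyticExt (f w) (fun z => f (w + z)) := by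
  refine ⟨h.1.comp (by fun_prop), fun t => ?_⟩
  have : (fun w => f (w + t)) = fun w => d.α t (f w) := by
    refine aux_entire_eq (h.1.comp (by fun_prop)) (aux_diff_comp _ h.1) fun s => ?_
    rw [h.2, ← d.α_add, add_comm t s, ← h.2]; push_cast; rfl
  exact congrFun this w

theorem aux_ext_zero (d : Dynamics A) {a : A} {f : ℂ → A} (h : d.IsAnalyticExt a f) : f 0 = a := by
  have := h.2 0
  simpa [d.α_zero] using this

theorem aux_ext_star (d : Dynamics A) {a : A} {f : ℂ → A} (h : d.IsAnalyticExt a f) :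
    d.IsAnalyticExt (star a) (fun z => star (f (star z))) := by
  refine ⟨fun z => ?_, fun t => ?_⟩
  · have := (h.1 (star z)).star_star
    simpa [Function.comp_def] using! this
  · have : star (t : ℂ) = t := Complex.conj_ofReal t
    show star (f (star (t : ℂ))) = _
    rw [this, h.2, map_star]

theorem aux_ext_mul (d : Dynamics A) {a b : A} {f g : ℂ → A} (h : d.IsAnalyticExt a f)
    (h' : d.IsAnalyticExt b g) : d.IsAnalyticExt (a * b) (fun z => f z * g z) :=
  ⟨h.1.mul h'.1, fun t => by simp [h.2, h'.2]⟩

theorem aux_ext_add (d : Dynamics A) {a b : A} {f g : ℂ → A} (h : d.IsAnalyticExt a f)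
    (h' : d.IsAnalyticExt b g) : d.IsAnalyticExt (a + b) (fun z => f z + g z) :=
  ⟨h.1.add h'.1, fun t => by simp [h.2, h'.2]⟩

theorem aux_ext_smul (d : Dynamics A) {a : A} {f : ℂ → A} (c : ℂ) (h : d.IsAnalyticExt a f) :
    d.IsAnalyticExt (c • a) (fun z => c • f z) :=
  ⟨h.1.const_smul c, fun t => by simp [h.2]⟩

theorem aux_ext_const (d : Dynamics A) {a : A} (h : ∀ t, d.α t a = a) :
    d.IsAnalyticExt a (fun _ => a) :=
  ⟨by fun_prop, fun t => (h t).symm⟩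

theorem aux_ext_norm (d : Dynamics A) {a : A} {f : ℂ → A} (h : d.IsAnalyticExt a f) (x y : ℝ) :
    ‖f (x + Complex.I * y)‖ = ‖f (Complex.I * y)‖ := by
  have := (aux_ext_shift d h (Complex.I * y)).2 x
  simp only at this
  rw [add_comm, this, aux_norm_alpha]

/-- Invariance of KMS functionals (periodicity and Liouville). -/
theorem aux_inv (d : Dynamics A) {β : ℝ} (hβ : β ≠ 0) (ψ : A →L[ℂ] ℂ)
    (h : ∀ b f, d.IsAnalyticExt b f → ψ (f (Complex.I * β)) = ψ b)
    {b : A} {f : ℂ → A} (hb : d.IsAnalyticExt b f) (t : ℝ) : ψ (d.α t b) = ψ b := by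
  set F : ℂ → ℂ := fun z => ψ (f z) with hF
  have hFd : Differentiable ℂ F := ψ.differentiable.comp hb.1
  have hp : ∀ z, F (z + Complex.I * β) = F z := fun z => h _ _ (aux_ext_shift d hb z)
  have hpn : ∀ (n : ℤ) z, F (z + n * (Complex.I * β)) = F z := by
    intro n z
    have : Function.Periodic F (Complex.I * β) := hp
    exact this.int_mul n z
  -- bounded on the strip
  have hcont : Continuous (fun y : ℝ => ‖f (Complex.I * y)‖) := by
    have := hb.1.continuous
    fun_prop
  obtain ⟨C, hC⟩ := (isCompact_Icc (a := -|β|) (b := |β|)).bddAbove_image hcont.continuousOn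
  have hbd : Bornology.IsBounded (Set.range F) := by
    rw [isBounded_iff_forall_norm_le]
    refine ⟨‖ψ‖ * C, ?_⟩
    rintro _ ⟨z, rfl⟩
    set n : ℤ := -⌊z.im / β⌋ with hn
    rw [← hpn n z]
    set w := z + n * (Complex.I * β) with hw
    have him : w.im = z.im - ⌊z.im / β⌋ * β := by
      simp [hw, hn]; ring
    have him2 : w.im = Int.fract (z.im / β) * β := by
      rw [him, Int.fract]; field_simp
    have h1 : |w.im| ≤ |β| := by
      rw [him2, abs_mul, abs_of_nonneg (Int.fract_nonneg _)]
      exact mul_le_of_le_one_left (abs_nonneg _) (Int.fract_lt_one _).le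
    have hwe : w = (w.re : ℂ) + Complex.I * (w.im : ℝ) := by
      rw [mul_comm]; exact (Complex.re_add_im w).symm
    calc ‖F w‖ ≤ ‖ψ‖ * ‖f w‖ := ψ.le_opNorm _
      _ ≤ ‖ψ‖ * C := by
        gcongr
        rw [hwe, aux_ext_norm d hb]
        exact hC ⟨w.im, abs_le.1 h1, rfl⟩
  have := hFd.apply_eq_apply_of_bounded hbd t 0
  simp only [hF, hb.2, aux_ext_zero d hb] at this
  exact this

variable {Hs : Type*} [NormedAddCommGroup Hs] [InnerProductSpace ℂ Hs] [CompleteSpace Hs]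

theorem aux_adj (π : A →⋆ₐ[ℂ] (Hs →L[ℂ] Hs)) (a : A) (x y : Hs) :
    ⟪x, π a y⟫_ℂ = ⟪π (star a) x, y⟫_ℂ := by
  rw [map_star, ContinuousLinearMap.star_eq_adjoint, ContinuousLinearMap.adjoint_inner_left]

theorem aux_mul (π : A →⋆ₐ[ℂ] (Hs →L[ℂ] Hs)) (a b : A) (x : Hs) :
    π (a * b) x = π a (π b x) := by
  rw [map_mul]; rfl

theorem aux_cont (π : A →⋆ₐ[ℂ] (Hs →L[ℂ] Hs)) : Continuous π :=
  AddMonoidHomClass.continuous_of_bound π 1 fun a => by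
    rw [one_mul]; exact NonUnitalStarAlgHom.norm_apply_le π a

theorem aux_norm_le (π : A →⋆ₐ[ℂ] (Hs →L[ℂ] Hs)) (a : A) (x : Hs) : ‖π a x‖ ≤ ‖a‖ * ‖x‖ :=
  (ContinuousLinearMap.le_opNorm _ _).trans
    (mul_le_mul_of_nonneg_right (NonUnitalStarAlgHom.norm_apply_le π a) (norm_nonneg _))

theorem aux_norm_sq (π : A →⋆ₐ[ℂ] (Hs →L[ℂ] Hs)) (a : A) (Ω : Hs) :
    ⟪Ω, π (star a * a) Ω⟫_ℂ = ((‖π a Ω‖ ^ 2 : ℝ) : ℂ) := by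
  rw [aux_mul, aux_adj, star_star, inner_self_eq_norm_sq_to_K]; push_cast; rfl

/-- Linear map `a ↦ π a x`. -/
def auxE (π : A →⋆ₐ[ℂ] (Hs →L[ℂ] Hs)) (x : Hs) : A →ₗ[ℂ] Hs where
  toFun a := π a x
  map_add' a b := by simp
  map_smul' c a := by simp

theorem aux_eq_of_inner {π : A →⋆ₐ[ℂ] (Hs →L[ℂ] Hs)} {Ω : Hs}
    (hcyc : Dense (Set.range fun a : A => π a Ω)) {x y : Hs}
    (h : ∀ a, ⟪π a Ω, x⟫_ℂ = ⟪π a Ω, y⟫_ℂ) : x = y := by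
  refine hcyc.eq_of_inner_right (𝕜 := ℂ) ?_
  rintro _ ⟨a, rfl⟩
  exact h a

theorem aux_clm_ext {π : A →⋆ₐ[ℂ] (Hs →L[ℂ] Hs)} {Ω : Hs}
    (hcyc : Dense (Set.range fun a : A => π a Ω)) {S T : Hs →L[ℂ] Hs}
    (h : ∀ a, S (π a Ω) = T (π a Ω)) : S = T := by
  refine ContinuousLinearMap.coeFn_injective (Continuous.ext_on hcyc S.continuous T.continuous ?_)
  rintro _ ⟨a, rfl⟩
  exact h a

theorem aux_vec {π : A →⋆ₐ[ℂ] (Hs →L[ℂ] Hs)} {Ω : Hs}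
    (hcyc : Dense (Set.range fun a : A => π a Ω)) (τ : Hs) (C : ℝ) (hC : 0 ≤ C)
    (h : ∀ a, ‖π a τ‖ ≤ C * ‖π a Ω‖) :
    ∃ T : Hs →L[ℂ] Hs, ‖T‖ ≤ C ∧ (∀ a, T (π a Ω) = π a τ) ∧ ∀ a x, T (π a x) = π a (T x) := by
  have hd : DenseRange (auxE π Ω) := hcyc
  refine ⟨(auxE π τ).extendOfNorm (auxE π Ω), LinearMap.opNorm_extendOfNorm_le hd hC h,
    fun a => LinearMap.extendOfNorm_eq hd ⟨C, h⟩ a, fun a x => ?_⟩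
  have key : ∀ a, (auxE π τ).extendOfNorm (auxE π Ω) (π a Ω) = π a τ :=
    fun a => LinearMap.extendOfNorm_eq hd ⟨C, h⟩ a
  generalize (auxE π τ).extendOfNorm (auxE π Ω) = T at key
  have : T * π a = π a * T := by
    refine aux_clm_ext hcyc fun b => ?_
    simp only [mul_apply_eq_comp]
    rw [← aux_mul, key, key, aux_mul]
  exact congrArg (fun S : Hs →L[ℂ] Hs => S x) this

theorem aux_pow_bound {r s C : ℝ} (hs : 0 ≤ s) (h : ∀ k : ℕ, r ^ (2 ^ k) ≤ C * s ^ (2 ^ k)) : r ≤ s := by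
  by_contra! hlt
  have hr : 0 < r := hs.trans_lt hlt
  have ht : Tendsto (fun k : ℕ => C * (s / r) ^ (2 ^ k)) atTop (𝓝 (C * 0)) := by
    refine Tendsto.const_mul _ ?_
    exact (tendsto_pow_atTop_nhds_zero_of_lt_one (by positivity) ((div_lt_one hr).2 hlt)).comp
      (tendsto_pow_atTop_atTop_of_one_lt (by norm_num))
  have : (1 : ℝ) ≤ C * 0 := by
    refine ge_of_tendsto' ht fun k => ?_
    rw [div_pow, ← mul_div_assoc, le_div_iff₀ (by positivity), one_mul]
    exact h k
  norm_num at this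

theorem aux_right_bound {π : A →⋆ₐ[ℂ] (Hs →L[ℂ] Hs)} {Ω : Hs} (e : A)
    (he : ∀ w, ⟪Ω, π (star e * w) Ω⟫_ℂ = ⟪Ω, π (w * e) Ω⟫_ℂ) (a : A) :
    ‖π (a * e) Ω‖ ≤ ‖e‖ * ‖π a Ω‖ := by
  have step : ∀ e : A, (∀ w, ⟪Ω, π (star e * w) Ω⟫_ℂ = ⟪Ω, π (w * e) Ω⟫_ℂ) →
      ‖π (a * e) Ω‖ ^ 2 ≤ ‖π (a * e ^ 2) Ω‖ * ‖π a Ω‖ := by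
    intro e he
    have h1 : ((‖π (a * e) Ω‖ ^ 2 : ℝ) : ℂ) = ⟪π a Ω, π (a * e ^ 2) Ω⟫_ℂ := by
      rw [← aux_norm_sq, star_mul, mul_assoc, he]
      have : star a * (a * e) * e = star a * (a * e ^ 2) := by rw [pow_two]; simp only [mul_assoc]
      rw [this, aux_mul, aux_adj, star_star]
    have h2 : ‖π (a * e) Ω‖ ^ 2 = ‖⟪π a Ω, π (a * e ^ 2) Ω⟫_ℂ‖ := by
      rw [← h1, Complex.norm_real, Real.norm_of_nonneg (by positivity)]
    rw [h2, mul_comm]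
    exact norm_inner_le_norm _ _
  have hpow : ∀ k : ℕ, ∀ w, ⟪Ω, π (star (e ^ k) * w) Ω⟫_ℂ = ⟪Ω, π (w * e ^ k) Ω⟫_ℂ := by
    intro k
    induction k with
    | zero => intro w; simp
    | succ k ih =>
      intro w
      rw [pow_succ, star_mul, mul_assoc, he, mul_assoc, ih, mul_assoc, ← pow_succ', pow_succ]
  rcases eq_or_lt_of_le (norm_nonneg (π a Ω)) with h0 | h0
  · have := step e he
    rw [← h0] at this ⊢
    have h3 : ‖π (a * e) Ω‖ ^ 2 ≤ 0 := by simpa using this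
    have h4 := sq_nonneg ‖π (a * e) Ω‖
    have h5 : ‖π (a * e) Ω‖ = 0 := by
      exact pow_eq_zero_iff (two_ne_zero) |>.1 (le_antisymm h3 h4)
    rw [h5]; simp
  · rw [← div_le_iff₀ h0]
    refine aux_pow_bound (C := ‖a‖ * ‖Ω‖ / ‖π a Ω‖) (norm_nonneg e) fun k => ?_
    have h6 : (‖π (a * e) Ω‖ / ‖π a Ω‖) ^ (2 ^ k) ≤ ‖π (a * e ^ (2 ^ k)) Ω‖ / ‖π a Ω‖ := by
      induction k with
      | zero => simp
      | succ k ih =>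
        rw [pow_succ 2 k, pow_mul]
        calc _ ≤ (‖π (a * e ^ (2 ^ k)) Ω‖ / ‖π a Ω‖) ^ 2 := by gcongr
          _ ≤ _ := by
            rw [div_pow, div_le_div_iff₀ (by positivity) h0, pow_two ‖π a Ω‖, ← mul_assoc, pow_mul]
            gcongr
            exact step _ (hpow _)
    refine h6.trans ?_
    rw [div_mul_eq_mul_div]
    gcongr
    refine (aux_norm_le _ _ _).trans ?_
    rw [mul_right_comm]
    gcongr
    refine (norm_mul_le _ _).trans ?_
    gcongr
    exact norm_pow_le' _ (by positivity)

/-- Full KMS property of the vector state. -/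
def AuxKMS (d : Dynamics A) (β : ℝ) (ψ : A → ℂ) : Prop :=
  ∀ a b f, d.IsAnalyticExt b f → ψ (a * f (Complex.I * β)) = ψ (b * a)

theorem aux_right {d : Dynamics A} {β : ℝ} {π : A →⋆ₐ[ℂ] (Hs →L[ℂ] Hs)} {Ω : Hs}
    (hcyc : Dense (Set.range fun a : A => π a Ω))
    (hK : AuxKMS d β (fun a => ⟪Ω, π a Ω⟫_ℂ)) {b : A} {f : ℂ → A} (hb : d.IsAnalyticExt b f) :
    ∃ B : Hs →L[ℂ] Hs, (∀ a, B (π a Ω) = π (a * b) Ω) ∧ ∀ a x, B (π a x) = π a (B x) := by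
  have hs := aux_ext_star d hb
  set b' : A := star (f (star (Complex.I * β))) with hb'
  have hs2 := aux_ext_star d (aux_ext_shift d hs (Complex.I * β))
  have h1 : ∀ x, ⟪Ω, π (star b * x) Ω⟫_ℂ = ⟪Ω, π (x * b') Ω⟫_ℂ := fun x => (hK x _ _ hs).symm
  have h2 : ∀ x, ⟪Ω, π (star b' * x) Ω⟫_ℂ = ⟪Ω, π (x * b) Ω⟫_ℂ := by
    intro x
    have := (hK x _ _ hs2).symm
    have e : Complex.I * (β : ℂ) + star (Complex.I * (β : ℂ)) = 0 := by simp
    simp only [e, star_zero, star_star, aux_ext_zero d hb] at this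
    simpa [hb'] using this
  obtain ⟨C, hC0, hC⟩ : ∃ C : ℝ, 0 ≤ C ∧ ∀ a, ‖π a (π b Ω)‖ ≤ C * ‖π a Ω‖ := by
    have hd : ∀ w, ⟪Ω, π (star (b * b') * w) Ω⟫_ℂ = ⟪Ω, π (w * (b * b')) Ω⟫_ℂ := by
      intro w
      rw [star_mul, mul_assoc, h2, mul_assoc, h1, mul_assoc]
    refine ⟨√ ‖b * b'‖, by positivity, fun a => ?_⟩
    have h3 : ((‖π (a * b) Ω‖ ^ 2 : ℝ) : ℂ) = ⟪π a Ω, π (a * (b * b')) Ω⟫_ℂ := by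
      rw [← aux_norm_sq, star_mul, mul_assoc, h1]
      have : star a * (a * b) * b' = star a * (a * (b * b')) := by simp only [mul_assoc]
      rw [this, aux_mul, aux_adj, star_star]
    have h4 : ‖π (a * b) Ω‖ ^ 2 = ‖⟪π a Ω, π (a * (b * b')) Ω⟫_ℂ‖ := by
      rw [← h3, Complex.norm_real, Real.norm_of_nonneg (by positivity)]
    rw [← aux_mul]
    refine le_of_sq_le_sq ?_ (by positivity)
    rw [h4, mul_pow, Real.sq_sqrt (norm_nonneg _)]
    refine (norm_inner_le_norm _ _).trans ?_
    have := aux_right_bound _ hd a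
    nlinarith [norm_nonneg (π a Ω)]
  obtain ⟨B, -, h5, h6⟩ := aux_vec hcyc (π b Ω) C hC0 hC
  exact ⟨B, fun a => by rw [h5, aux_mul], h6⟩

theorem aux_KMSM {d : Dynamics A} {β : ℝ} {π : A →⋆ₐ[ℂ] (Hs →L[ℂ] Hs)} {Ω : Hs}
    (hcyc : Dense (Set.range fun a : A => π a Ω))
    (hK : AuxKMS d β (fun a => ⟪Ω, π a Ω⟫_ℂ)) {b : A} {f : ℂ → A} (hb : d.IsAnalyticExt b f)
    {m : Hs →L[ℂ] Hs} (hm : m ∈ envVN π) :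
    ⟪Ω, m (π (f (Complex.I * β)) Ω)⟫_ℂ = ⟪Ω, π b (m Ω)⟫_ℂ := by
  obtain ⟨B, hB1, hB2⟩ := aux_right hcyc hK (aux_ext_shift d hb (Complex.I * β))
  have hBc : B ∈ Set.centralizer (Set.range fun a => π a) := by
    rintro _ ⟨a, rfl⟩
    ext x
    exact (hB2 a x).symm
  have hc : B * m = m * B := hm B hBc
  have hBΩ : B Ω = π (f (Complex.I * β)) Ω := by
    have := hB1 1
    simpa using this
  have hadj : ContinuousLinearMap.adjoint B Ω = π (star b) Ω := by
    refine aux_eq_of_inner hcyc fun a => ?_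
    rw [ContinuousLinearMap.adjoint_inner_right, hB1]
    have h2 := congrArg (starRingEnd ℂ) (hK a b f hb)
    simp only [inner_conj_symm] at h2
    rw [h2, aux_mul, ← inner_conj_symm, aux_adj, inner_conj_symm]
  have : m (B Ω) = B (m Ω) := congrArg (fun S : Hs →L[ℂ] Hs => S Ω) hc.symm
  rw [← hBΩ, this, ← ContinuousLinearMap.adjoint_inner_left, hadj, ← aux_adj]

/-- The functional `a ↦ ⟪x, π a y⟫` as a continuous linear map. -/
theorem aux_functional (π : A →⋆ₐ[ℂ] (Hs →L[ℂ] Hs)) (x y : Hs) :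
    ∃ L : A →L[ℂ] ℂ, ∀ a, L a = ⟪x, π a y⟫_ℂ := by
  have hc := aux_cont π
  exact ⟨⟨(innerSL ℂ x).toLinearMap.comp (auxE π y), by
    have : Continuous fun a => ⟪x, π a y⟫_ℂ := by fun_prop
    exact this⟩, fun a => rfl⟩

theorem aux_inv' {d : Dynamics A} {β : ℝ} (hβ : β ≠ 0) {π : A →⋆ₐ[ℂ] (Hs →L[ℂ] Hs)} {x y : Hs}
    (hdense : Dense {a : A | ∃ f, d.IsAnalyticExt a f})
    (hK : AuxKMS d β (fun a => ⟪x, π a y⟫_ℂ)) (t : ℝ) (a : A) :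
    ⟪x, π (d.α t a) y⟫_ℂ = ⟪x, π a y⟫_ℂ := by
  obtain ⟨L, hL⟩ := aux_functional π x y
  have h1 : Continuous fun a => L (d.α t a) := L.continuous.comp (aux_isom (d.α t)).continuous
  have := Continuous.ext_on hdense h1 L.continuous (by
    rintro b ⟨f, hb⟩
    refine aux_inv d hβ L (fun b f hb => ?_) hb t
    have := hK 1 b f hb
    simpa [hL] using this)
  simpa [hL] using congrFun this a

theorem aux_U {d : Dynamics A} {π : A →⋆ₐ[ℂ] (Hs →L[ℂ] Hs)} {Ω : Hs}
    (hcyc : Dense (Set.range fun a : A => π a Ω))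
    (hinv : ∀ t a, ⟪Ω, π (d.α t a) Ω⟫_ℂ = ⟪Ω, π a Ω⟫_ℂ) :
    ∃ U : ℝ → Hs →L[ℂ] Hs, (∀ t a, U t (π a Ω) = π (d.α t a) Ω) ∧
      ∀ t x y, ⟪U t x, y⟫_ℂ = ⟪x, U (-t) y⟫_ℂ := by
  have hd : DenseRange (auxE π Ω) := hcyc
  have hn : ∀ t a, ‖π (d.α t a) Ω‖ ≤ 1 * ‖π a Ω‖ := by
    intro t a
    have h1 := aux_norm_sq π (d.α t a) Ω
    rw [← map_star, ← map_mul, hinv, aux_norm_sq] at h1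
    have h2 : ‖π a Ω‖ ^ 2 = ‖π (d.α t a) Ω‖ ^ 2 := by exact_mod_cast h1
    rw [one_mul]
    exact le_of_sq_le_sq h2.ge (norm_nonneg _)
  have key : ∀ t, ∃ U : Hs →L[ℂ] Hs, ∀ a, U (π a Ω) = π (d.α t a) Ω := fun t =>
    ⟨((auxE π Ω).comp (d.α t).toAlgEquiv.toLinearMap).extendOfNorm (auxE π Ω),
      fun a => LinearMap.extendOfNorm_eq hd ⟨1, hn t⟩ a⟩
  choose U hU using key
  refine ⟨U, hU, fun t x y => ?_⟩
  have h1 : ContinuousLinearMap.adjoint (U t) = U (-t) := by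
    refine aux_clm_ext hcyc fun a => aux_eq_of_inner hcyc fun b => ?_
    rw [ContinuousLinearMap.adjoint_inner_right, hU, hU]
    have h2 : ∀ a b, ⟪π b Ω, π a Ω⟫_ℂ = ⟪Ω, π (star b * a) Ω⟫_ℂ := by
      intro a b
      rw [aux_mul, aux_adj, aux_adj, aux_adj, star_star]
    have h3 : d.α t (star b * d.α (-t) a) = star (d.α t b) * a := by
      rw [map_mul, map_star, ← d.α_add, add_neg_cancel, d.α_zero]
    rw [h2, h2, ← hinv t (star b * d.α (-t) a), h3]
  rw [← h1, ContinuousLinearMap.adjoint_inner_right]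

theorem aux_graph {d : Dynamics A} {β : ℝ} {π : A →⋆ₐ[ℂ] (Hs →L[ℂ] Hs)} {Ω : Hs}
    (hcyc : Dense (Set.range fun a : A => π a Ω))
    (hdense : Dense {a : A | ∃ f, d.IsAnalyticExt a f})
    (hK : AuxKMS d β (fun a => ⟪Ω, π a Ω⟫_ℂ)) (ζ : Hs)
    (hζ : AuxKMS d β (fun a => ⟪Ω, π a ζ⟫_ℂ)) (ε : ℝ) (hε : 0 < ε) :
    ∃ a f, d.IsAnalyticExt a f ∧ ‖π a Ω - ζ‖ < ε ∧ ‖π (f (Complex.I * β)) Ω - ζ‖ < ε := by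
  have hD : Dense ((fun a => π a Ω) '' {a : A | ∃ f, d.IsAnalyticExt a f}) := by
    have hc := aux_cont π
    have : DenseRange (fun a => π a Ω) := hcyc
    exact this.dense_image (by fun_prop) hdense
  by_cases hβ : β = 0
  · obtain ⟨x, ⟨a, ⟨f, hf⟩, rfl⟩, hx⟩ := hD.exists_dist_lt ζ hε
    have : ‖π a Ω - ζ‖ < ε := by rwa [dist_comm, dist_eq_norm] at hx
    refine ⟨a, f, hf, this, ?_⟩
    simpa [hβ, aux_ext_zero d hf] using this
  obtain ⟨U, hU, hUU⟩ := aux_U hcyc (aux_inv' hβ hdense hK)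
  have hUζ : ∀ t, U t ζ = ζ := by
    intro t
    refine aux_eq_of_inner hcyc fun a => ?_
    have h1 := hUU (-t) (π a Ω) ζ
    rw [neg_neg] at h1
    have h2 := aux_inv' hβ hdense hζ (-t) (star a)
    rw [← h1, hU]
    rw [aux_adj, aux_adj, ← map_star, star_star] at h2
    exact h2
  let G : Submodule ℂ (WithLp 2 (Hs × Hs)) :=
    { carrier := {v | ∃ a f, d.IsAnalyticExt a f ∧
        v = WithLp.toLp 2 (π a Ω, π (f (Complex.I * β)) Ω)}
      add_mem' := by
        rintro _ _ ⟨a, f, h, rfl⟩ ⟨b, g, h', rfl⟩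
        refine ⟨_, _, aux_ext_add d h h', ?_⟩
        simp [← WithLp.toLp_add]
      zero_mem' := ⟨0, fun _ => 0, aux_ext_const d (fun t => map_zero _), by simp; rfl⟩
      smul_mem' := by
        rintro c _ ⟨a, f, h, rfl⟩
        refine ⟨_, _, aux_ext_smul d c h, ?_⟩
        simp [← WithLp.toLp_smul] }
  let W : ℝ → WithLp 2 (Hs × Hs) → WithLp 2 (Hs × Hs) := fun t v =>
    WithLp.toLp 2 (U t v.fst, U t v.snd)
  have hW : ∀ t x y, ⟪W t x, y⟫_ℂ = ⟪x, W (-t) y⟫_ℂ := by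
    intro t x y
    simp [W, WithLp.prod_inner_apply, hUU]
  have hWG : ∀ t, ∀ v ∈ G, W t v ∈ G := by
    rintro t _ ⟨a, f, h, rfl⟩
    have h2 := aux_ext_shift d h t
    rw [h.2] at h2
    refine ⟨_, _, h2, ?_⟩
    have h3 := (aux_ext_shift d h (Complex.I * β)).2 t
    simp only at h3
    simp [W, hU, add_comm (t : ℂ), h3]
  have hWG' : ∀ t, ∀ v ∈ Gᗮ, W t v ∈ Gᗮ := by
    intro t v hv
    rw [Submodule.mem_orthogonal'] at hv ⊢
    intro w hw
    rw [hW]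
    exact hv _ (hWG _ _ hw)
  set v : WithLp 2 (Hs × Hs) := WithLp.toLp 2 (ζ, ζ) with hv
  have hWv : ∀ t, W t v = v := by
    intro t; simp [W, hv, hUζ]
  have : CompleteSpace Gᗮ := (Submodule.isClosed_orthogonal G).completeSpace_coe
  have : (Gᗮ).HasOrthogonalProjection := Submodule.HasOrthogonalProjection.ofCompleteSpace _
  obtain ⟨r, hr, p, hp, hvrp⟩ := (Gᗮ).exists_add_mem_mem_orthogonal v
  have hWr : ∀ t, W t r = r := by
    intro t
    have h1 : W t r - r ∈ Gᗮ := Gᗮ.sub_mem (hWG' t r hr) hr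
    have h2 : W t r - r = p - W t p := by
      have h3 : W t v = W t r + W t p := by
        rw [hvrp]; simp [W, ← WithLp.toLp_add]
      rw [hWv, hvrp] at h3
      rw [sub_eq_sub_iff_add_eq_add, ← h3, add_comm]
    have h3 : W t p ∈ Gᗮᗮ := by
      rw [Submodule.mem_orthogonal'] at hp ⊢
      intro w hw
      rw [hW]
      exact hp _ (hWG' _ _ hw)
    have h4 : W t r - r ∈ Gᗮᗮ := by rw [h2]; exact Gᗮᗮ.sub_mem hp h3
    have h5 := Submodule.disjoint_def.1 (Gᗮ).orthogonal_disjoint _ h1 h4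
    exact sub_eq_zero.1 h5
  have hr1 : ∀ t, U t r.fst = r.fst := fun t => congrArg (fun w : WithLp 2 (Hs × Hs) => w.fst) (hWr t)
  have hr2 : ∀ t, U t r.snd = r.snd := fun t => congrArg (fun w : WithLp 2 (Hs × Hs) => w.snd) (hWr t)
  have hsum : r.fst + r.snd = 0 := by
    refine hD.eq_zero_of_inner_left (𝕜 := ℂ) ?_
    rintro _ ⟨a, ⟨f, hf⟩, rfl⟩
    have h1 : ⟪r, WithLp.toLp 2 (π a Ω, π (f (Complex.I * β)) Ω)⟫_ℂ = 0 :=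
      (Submodule.mem_orthogonal' _ _).1 hr _ ⟨a, f, hf, rfl⟩
    have h2 : ⟪r.snd, π (f (Complex.I * β)) Ω⟫_ℂ = ⟪r.snd, π a Ω⟫_ℂ := by
      obtain ⟨L, hL⟩ := aux_functional π r.snd Ω
      have : (fun z => L (f z)) = fun _ => L a := by
        refine aux_entire_eq (L.differentiable.comp hf.1) (by fun_prop) fun t => ?_
        rw [hL, hL, hf.2, ← hU]
        have := hUU (-t) r.snd (π a Ω)
        rw [neg_neg] at this
        rw [← this, hr2]
      have := congrFun this (Complex.I * β)
      simpa [hL] using this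
    simp only [WithLp.prod_inner_apply] at h1
    rw [inner_add_left, ← h2]
    exact h1
  have hr0 : r = 0 := by
    have h1 : ⟪r, v⟫_ℂ = 0 := by
      simp only [WithLp.prod_inner_apply, hv]
      rw [← inner_add_left]
      have : r.ofLp.1 + r.ofLp.2 = 0 := hsum
      rw [this, inner_zero_left]
    have h2 : ⟪r, p⟫_ℂ = 0 := (Submodule.mem_orthogonal _ _).1 hp r hr
    rw [hvrp, inner_add_right, h2, add_zero] at h1
    exact inner_self_eq_zero.1 h1
  have hvG : v ∈ closure (G : Set (WithLp 2 (Hs × Hs))) := by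
    rw [hr0, zero_add] at hvrp
    rw [← hvrp, Submodule.orthogonal_orthogonal_eq_closure] at hp
    exact hp
  obtain ⟨w, ⟨a, f, hf, rfl⟩, hw⟩ := Metric.mem_closure_iff.1 hvG ε hε
  rw [dist_comm, dist_eq_norm] at hw
  refine ⟨a, f, hf, lt_of_le_of_lt ?_ hw, lt_of_le_of_lt ?_ hw⟩
  · exact WithLp.norm_fst_le (p := 2) _ (WithLp.toLp 2 (π a Ω, π (f (Complex.I * β)) Ω) - v)
  · exact WithLp.norm_snd_le (p := 2) _ (WithLp.toLp 2 (π a Ω, π (f (Complex.I * β)) Ω) - v)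

theorem aux_tendsto_inner {ι : Type*} {l : Filter ι} {x : ι → Hs}
    (h : Tendsto (fun k => ⟪x k, x k⟫_ℂ) l (𝓝 0)) : Tendsto (fun k => ‖x k‖) l (𝓝 0) := by
  have h1 : Tendsto (fun k => √ ‖⟪x k, x k⟫_ℂ‖) l (𝓝 (√ ‖(0 : ℂ)‖)) :=
    (Real.continuous_sqrt.tendsto _).comp h.norm
  simp only [norm_zero, Real.sqrt_zero] at h1
  refine h1.congr fun k => ?_
  rw [inner_self_eq_norm_sq_to_K]
  simp

theorem aux_joint (π : A →⋆ₐ[ℂ] (Hs →L[ℂ] Hs)) {ι : Type*} {l : Filter ι} {a : ι → A} {x : ι → Hs}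
    {a' : A} {x' : Hs} (ha : Tendsto a l (𝓝 a')) (hx : Tendsto x l (𝓝 x')) :
    Tendsto (fun k => π (a k) (x k)) l (𝓝 (π a' x')) := by
  have hc := aux_cont π
  have : Continuous fun p : A × Hs => π p.1 p.2 := by fun_prop
  exact (this.tendsto (a', x')).comp (ha.prodMk_nhds hx)

theorem aux_pair (π : A →⋆ₐ[ℂ] (Hs →L[ℂ] Hs)) (Ω : Hs) (a b : A) (x : Hs) :
    ⟪π b x, π a Ω⟫_ℂ = ⟪x, π (star b * a) Ω⟫_ℂ := by
  rw [aux_mul, aux_adj π (star b), star_star]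

theorem aux_central {d : Dynamics A} {β : ℝ} {π : A →⋆ₐ[ℂ] (Hs →L[ℂ] Hs)} {Ω : Hs}
    (hcyc : Dense (Set.range fun a : A => π a Ω))
    (hdense : Dense {a : A | ∃ f, d.IsAnalyticExt a f})
    (hK : AuxKMS d β (fun a => ⟪Ω, π a Ω⟫_ℂ)) (ζ : Hs)
    (hζ : AuxKMS d β (fun a => ⟪Ω, π a ζ⟫_ℂ))
    (hsym : ∀ a, ⟪Ω, π a ζ⟫_ℂ = ⟪ζ, π a Ω⟫_ℂ) (z : Hs →L[ℂ] Hs)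
    (hz : ∀ a, z (π a Ω) = π a ζ) (hzc : ∀ a x, z (π a x) = π a (z x)) :
    z ∈ envCenter π ∧ star z = z := by
  have hzΩ : z Ω = ζ := by simpa using hz 1
  have hzsa : ContinuousLinearMap.adjoint z = z := by
    refine aux_clm_ext hcyc fun a => aux_eq_of_inner hcyc fun b => ?_
    rw [ContinuousLinearMap.adjoint_inner_right, hz, hz, aux_pair, ← hsym, aux_mul,
      aux_adj π (star b), star_star]
  have hzin : ∀ x y, ⟪z x, y⟫_ℂ = ⟪x, z y⟫_ℂ := by
    intro x y
    conv_lhs => rw [← hzsa]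
    rw [ContinuousLinearMap.adjoint_inner_left]
  have hzcent : z ∈ Set.centralizer (Set.range fun a => π a) := by
    rintro _ ⟨a, rfl⟩
    ext x
    exact (hzc a x).symm
  -- Step A
  have stepA : ∀ T : Hs →L[ℂ] Hs, (∀ a x, T (π a x) = π a (T x)) → ⟪ζ, T Ω⟫_ℂ = ⟪Ω, T ζ⟫_ℂ := by
    intro T hT
    have := fun k : ℕ => aux_graph hcyc hdense hK ζ hζ (1 / ((k : ℝ) + 1)) (by positivity)
    choose a f haf h1 h2 using this
    have lim1 : Tendsto (fun k => π (a k) Ω) atTop (𝓝 ζ) := by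
      rw [tendsto_iff_norm_sub_tendsto_zero]
      exact squeeze_zero (fun _ => norm_nonneg _) (fun k => (h1 k).le)
        tendsto_one_div_add_atTop_nhds_zero_nat
    have lim2 : Tendsto (fun k => π (f k (Complex.I * β)) Ω) atTop (𝓝 ζ) := by
      rw [tendsto_iff_norm_sub_tendsto_zero]
      exact squeeze_zero (fun _ => norm_nonneg _) (fun k => (h2 k).le)
        tendsto_one_div_add_atTop_nhds_zero_nat
    have lim3 : Tendsto (fun k => π (star (a k)) Ω) atTop (𝓝 ζ) := by
      rw [tendsto_iff_norm_sub_tendsto_zero]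
      refine aux_tendsto_inner ?_
      have e : ∀ k, ⟪π (star (a k)) Ω - ζ, π (star (a k)) Ω - ζ⟫_ℂ =
          ⟪π (a k) Ω, π (f k (Complex.I * β)) Ω⟫_ℂ - ⟪ζ, π (a k) Ω⟫_ℂ - ⟪π (a k) Ω, ζ⟫_ℂ
            + ⟪ζ, ζ⟫_ℂ := by
        intro k
        have e1 : ⟪π (star (a k)) Ω, π (star (a k)) Ω⟫_ℂ =
            ⟪π (a k) Ω, π (f k (Complex.I * β)) Ω⟫_ℂ := by
          rw [aux_pair, aux_pair, star_star]
          exact (hK (star (a k)) _ _ (haf k)).symm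
        have e2 : ⟪π (star (a k)) Ω, ζ⟫_ℂ = ⟪ζ, π (a k) Ω⟫_ℂ := by
          rw [← hsym, aux_adj]
        have e3 : ⟪ζ, π (star (a k)) Ω⟫_ℂ = ⟪π (a k) Ω, ζ⟫_ℂ := by
          rw [← inner_conj_symm, e2, inner_conj_symm]
        rw [inner_sub_left, inner_sub_right, inner_sub_right, e1, e2, e3]
        ring
      simp_rw [e]
      have := (((lim1.inner (𝕜 := ℂ) lim2).sub ((tendsto_const_nhds (x := ζ)).inner (𝕜 := ℂ) lim1)).sub
        (lim1.inner (𝕜 := ℂ) (tendsto_const_nhds (x := ζ)))).add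
        (tendsto_const_nhds (x := ⟪ζ, ζ⟫_ℂ))
      simpa using this
    have l1 : Tendsto (fun k => ⟪π (star (a k)) Ω, T Ω⟫_ℂ) atTop (𝓝 ⟪ζ, T Ω⟫_ℂ) :=
      lim3.inner (𝕜 := ℂ) tendsto_const_nhds
    have l2 : Tendsto (fun k => ⟪Ω, T (π (a k) Ω)⟫_ℂ) atTop (𝓝 ⟪Ω, T ζ⟫_ℂ) :=
      (tendsto_const_nhds (x := Ω)).inner (𝕜 := ℂ) ((T.continuous.tendsto _).comp lim1)
    refine tendsto_nhds_unique l1 (l2.congr fun k => ?_)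
    rw [hT, aux_adj]
  -- Step B
  have stepB : ∀ b f, d.IsAnalyticExt b f → ∃ B : Hs →L[ℂ] Hs, B Ω = π b Ω ∧ B ζ = π b ζ ∧
      ∀ a x, B (π a x) = π a (B x) := by
    intro b f hb
    obtain ⟨B, hB1, hB2⟩ := aux_right hcyc hK hb
    refine ⟨B, by simpa using hB1 1, ?_, hB2⟩
    have hs := aux_ext_shift d hb (-(Complex.I * β))
    set b0 := f (-(Complex.I * β)) with hb0
    have hval : f (-(Complex.I * β) + Complex.I * β) = b := by
      rw [neg_add_cancel, aux_ext_zero d hb]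
    have hadj : ∀ c, ContinuousLinearMap.adjoint B (π c Ω) = π (c * star b0) Ω := by
      intro c
      refine aux_eq_of_inner hcyc fun x => ?_
      rw [ContinuousLinearMap.adjoint_inner_right, hB1, ← inner_conj_symm, aux_pair,
        ← inner_conj_symm (π x Ω), aux_pair]
      have := hK (star c * x) _ _ hs
      simp only [hval] at this
      rw [← mul_assoc, this, star_mul, star_star, mul_assoc]
    refine aux_eq_of_inner hcyc fun c => ?_
    rw [← ContinuousLinearMap.adjoint_inner_left, hadj]
    have := hζ (star c) _ _ hs
    simp only [hval] at this
    rw [aux_mul, aux_adj, star_star] at this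
    rw [this, aux_adj π (b0 * star c), star_mul, star_star]
  refine ⟨⟨?_, ?_⟩, by rw [ContinuousLinearMap.star_eq_adjoint, hzsa]⟩
  · intro T hT
    have hTc : ∀ a x, T (π a x) = π a (T x) := fun a x =>
      congrArg (fun S : Hs →L[ℂ] Hs => S x) (hT (π a) ⟨a, rfl⟩).symm
    have key : ∀ b, ⟪Ω, T (z (π b Ω))⟫_ℂ = ⟪Ω, z (T (π b Ω))⟫_ℂ := by
      have hc := aux_cont π
      have c1 : Continuous fun b => ⟪Ω, T (z (π b Ω))⟫_ℂ := by fun_prop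
      have c2 : Continuous fun b => ⟪Ω, z (T (π b Ω))⟫_ℂ := by fun_prop
      refine congrFun (Continuous.ext_on hdense c1 c2 ?_)
      rintro b ⟨f, hb⟩
      obtain ⟨B, hBΩ, hBζ, hBc⟩ := stepB b f hb
      have := stepA (T * B) (fun a x => by
        simp only [mul_apply_eq_comp]
        rw [hBc, hTc])
      simp only [mul_apply_eq_comp] at this
      simp only
      rw [hz, ← hBζ, ← hBΩ, ← this, ← hzin, hzΩ]
    show T * z = z * T
    refine aux_clm_ext hcyc fun b => aux_eq_of_inner hcyc fun c => ?_
    simp only [mul_apply_eq_comp]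
    have := key (star c * b)
    rw [aux_mul, hzc (star c), hTc (star c), hTc (star c), hzc (star c), aux_adj π (star c),
      aux_adj π (star c), star_star] at this
    exact this
  · intro m hm
    exact (hm z hzcent).symm

theorem aux_R {γ : A ≃⋆ₐ[ℂ] A} {π : A →⋆ₐ[ℂ] (Hs →L[ℂ] Hs)} {Ω : Hs}
    (hcyc : Dense (Set.range fun a : A => π a Ω)) (hΩ : ⟪Ω, π 1 Ω⟫_ℂ = 1)
    (u : ℕ → A) (hu_sa : ∀ n, star (u n) = u n) (hu_un : ∀ n, u n * u n = 1)
    (hu_lim : Tendsto (fun p : ℕ × ℕ => ⟪Ω, π (u p.1 * u p.2) Ω⟫_ℂ) atTop (𝓝 1))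
    (hγ : ∀ a, Tendsto (fun n => u n * a * u n) atTop (𝓝 (γ a))) :
    ∃ R : Hs →L[ℂ] Hs, (∀ ξ, Tendsto (fun n => π (u n) ξ) atTop (𝓝 (R ξ))) ∧
      (∀ x, R (R x) = x) ∧ (∀ x y, ⟪R x, y⟫_ℂ = ⟪x, R y⟫_ℂ) ∧ (∀ x, ‖R x‖ = ‖x‖) ∧
      (∀ a x, R (π a x) = π (γ a) (R x)) ∧ R ∈ envVN π := by
  have huu : ∀ n x, π (u n) (π (u n) x) = x := by
    intro n x
    rw [← aux_mul, hu_un]; simp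
  have hin : ∀ n x y, ⟪π (u n) x, y⟫_ℂ = ⟪x, π (u n) y⟫_ℂ := by
    intro n x y
    rw [aux_adj, hu_sa]
  have hnorm : ∀ n x, ‖π (u n) x‖ = ‖x‖ := by
    intro n x
    have : ‖π (u n) x‖ ^ 2 = ‖x‖ ^ 2 := by
      rw [← inner_self_eq_norm_sq (𝕜 := ℂ), hin, huu, inner_self_eq_norm_sq]
    exact (pow_left_inj₀ (norm_nonneg _) (norm_nonneg _) two_ne_zero).1 this
  have hC : CauchySeq (fun n => π (u n) Ω) := by
    rw [cauchySeq_iff_tendsto_dist_atTop_0]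
    simp_rw [dist_eq_norm]
    refine aux_tendsto_inner ?_
    have e : ∀ p : ℕ × ℕ, ⟪π (u p.1) Ω - π (u p.2) Ω, π (u p.1) Ω - π (u p.2) Ω⟫_ℂ =
        2 - ⟪Ω, π (u p.1 * u p.2) Ω⟫_ℂ - starRingEnd ℂ ⟪Ω, π (u p.1 * u p.2) Ω⟫_ℂ := by
      intro p
      rw [inner_sub_left, inner_sub_right, inner_sub_right,
        ← inner_conj_symm (π (u p.2) Ω) (π (u p.1) Ω),
        aux_pair, aux_pair, aux_pair, hu_sa, hu_sa, hu_un, hu_un, hΩ]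
      ring
    simp_rw [e]
    have := ((tendsto_const_nhds (x := (2 : ℂ))).sub hu_lim).sub
      ((Complex.continuous_conj.tendsto _).comp hu_lim)
    convert! this using 2
    simp; norm_num
  obtain ⟨κ, hκ⟩ := cauchySeq_tendsto_of_complete hC
  have hmove : ∀ n a x, π (u n) (π a x) = π (u n * a * u n) (π (u n) x) := by
    intro n a x
    rw [aux_mul, huu, aux_mul]
  have hconv : ∀ ξ, ∃ y, Tendsto (fun n => π (u n) ξ) atTop (𝓝 y) := by
    intro ξ
    refine cauchySeq_tendsto_of_complete ?_
    rw [Metric.cauchySeq_iff]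
    intro ε hε
    obtain ⟨_, ⟨a, rfl⟩, ha⟩ := hcyc.exists_dist_lt ξ (show 0 < ε / 3 by positivity)
    have h1 : CauchySeq (fun n => π (u n) (π a Ω)) := by
      simp_rw [hmove]
      exact (aux_joint π (hγ a) hκ).cauchySeq
    obtain ⟨N, hN⟩ := (Metric.cauchySeq_iff.1 h1) (ε / 3) (by positivity)
    refine ⟨N, fun m hm n hn => ?_⟩
    have h2 := hN m hm n hn
    have h3 : ∀ k, dist (π (u k) ξ) (π (u k) (π a Ω)) < ε / 3 := by
      intro k
      rw [dist_eq_norm, ← map_sub, hnorm, ← dist_eq_norm]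
      exact ha
    have h4 := dist_triangle4 (π (u m) ξ) (π (u m) (π a Ω)) (π (u n) (π a Ω)) (π (u n) ξ)
    have h5 := h3 m
    have h6 := h3 n
    rw [dist_comm] at h6
    linarith
  choose r hr using hconv
  let R : Hs →L[ℂ] Hs := continuousLinearMapOfTendsto (l := atTop) (fun n => π (u n)) (f := r)
    (tendsto_pi_nhds.2 hr)
  have hR : ∀ ξ, Tendsto (fun n => π (u n) ξ) atTop (𝓝 (R ξ)) := hr
  clear_value R
  have hRR : ∀ x, R (R x) = x := by
    intro x
    refine tendsto_nhds_unique (hR (R x)) ?_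
    rw [tendsto_iff_norm_sub_tendsto_zero]
    have := tendsto_iff_norm_sub_tendsto_zero.1 (hR x)
    refine this.congr fun n => ?_
    rw [← norm_neg, neg_sub, ← hnorm n, map_sub, huu]
  have hRin : ∀ x y, ⟪R x, y⟫_ℂ = ⟪x, R y⟫_ℂ := by
    intro x y
    refine tendsto_nhds_unique ((hR x).inner (𝕜 := ℂ) (tendsto_const_nhds (x := y))) ?_
    refine ((tendsto_const_nhds (x := x)).inner (𝕜 := ℂ) (hR y)).congr fun n => ?_
    rw [hin]
  refine ⟨R, hR, hRR, hRin, fun x => ?_, fun a x => ?_, fun T hT => ?_⟩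
  · exact tendsto_nhds_unique ((hR x).norm) (by simp [hnorm])
  · refine tendsto_nhds_unique (hR _) ?_
    simp_rw [hmove]
    exact aux_joint π (hγ a) (hR x)
  · ext x
    simp only [mul_apply_eq_comp]
    refine tendsto_nhds_unique ((T.continuous.tendsto _).comp (hR x)) ?_
    refine (hR (T x)).congr fun n => ?_
    exact congrArg (fun S : Hs →L[ℂ] Hs => S x) (hT (π (u n)) ⟨_, rfl⟩)

theorem aux_conv {d : Dynamics A} {γ : A ≃⋆ₐ[ℂ] A} {β : ℝ} {ω : A → ℂ}
    {π : A →⋆ₐ[ℂ] (Hs →L[ℂ] Hs)} {Ω : Hs}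
    (hcyc : Dense (Set.range fun a : A => π a Ω))
    (hK : AuxKMS d β (fun a => ⟪Ω, π a Ω⟫_ℂ))
    (hrep : ∀ a : A, ω a = ⟪Ω, π a Ω⟫_ℂ)
    (hγγ : ∀ a, γ (γ a) = a)
    (hγΩ : ∀ a, ‖π (γ a) Ω‖ = ‖π a Ω‖)
    (R : Hs →L[ℂ] Hs) (hRn : ∀ x, ‖R x‖ = ‖x‖) (hRin : ∀ x y, ⟪R x, y⟫_ℂ = ⟪x, R y⟫_ℂ)
    (hRπ : ∀ a x, R (π a x) = π (γ a) (R x)) (hRM : R ∈ envVN π)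
    (hRm : ∀ m ∈ envVN π, ⟪Ω, m (R Ω)⟫_ℂ = ⟪Ω, R (m Ω)⟫_ℂ)
    (z : Hs →L[ℂ] Hs) (hz : z ∈ envCenter π) (hzs : star z = z) (hz1 : ‖z‖ ≤ 1) :
    TwistedKMSDom d γ β ω (fun a => ⟪Ω, π a (z (R Ω))⟫_ℂ) := by
  have hπM : ∀ a, π a ∈ envVN π := fun a => Set.subset_centralizer_centralizer ⟨a, rfl⟩
  have hmul : ∀ {m n : Hs →L[ℂ] Hs}, m ∈ envVN π → n ∈ envVN π → m * n ∈ envVN π :=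
    fun h h' => Set.mul_mem_centralizer h h'
  have hzc : ∀ m ∈ envVN π, ∀ x, z (m x) = m (z x) := fun m hm x =>
    congrArg (fun S : Hs →L[ℂ] Hs => S x) (hz.2 m hm).symm
  have hzin : ∀ x y, ⟪z x, y⟫_ℂ = ⟪x, z y⟫_ℂ := by
    intro x y
    conv_lhs => rw [← hzs]
    rw [ContinuousLinearMap.star_eq_adjoint, ContinuousLinearMap.adjoint_inner_left]
  have e0 : ∀ a, ⟪Ω, π a (z (R Ω))⟫_ℂ = ⟪Ω, R (π a (z Ω))⟫_ℂ := by
    intro a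
    exact hRm (π a * z) (hmul (hπM a) hz.1)
  refine ⟨⟨⟨fun a b => ?_, fun c a => ?_⟩, fun a b fa fb ha hb => ?_⟩, fun a => ?_, fun a b => ?_⟩
  · simp [inner_add_right]
  · simp [inner_smul_right]
  · simp only
    have h1 := aux_KMSM hcyc hK hb (hmul (hmul hRM (hπM a)) hz.1)
    simp only [mul_apply_eq_comp] at h1
    rw [e0, aux_mul, ← hzc _ (hπM _), h1, hRπ, ← hzc _ hRM, ← aux_mul]
  · simp only
    rw [inner_conj_symm, aux_adj, star_star, ← inner_conj_symm, ← inner_conj_symm (π a _)]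
    rw [hzin, hRin, hzc _ (hπM _), e0]
  · simp only
    have h1 : ‖⟪Ω, π (star a * b) (z (R Ω))⟫_ℂ‖ ≤ ‖π a Ω‖ * ‖π b Ω‖ := by
      rw [aux_mul, aux_adj, star_star]
      refine (norm_inner_le_norm _ _).trans ?_
      gcongr
      rw [← hzc _ (hπM b)]
      calc _ ≤ ‖z‖ * ‖π b (R Ω)‖ := z.le_opNorm _
        _ ≤ 1 * ‖π b (R Ω)‖ := by gcongr
        _ = _ := by
          have := hRπ (γ b) Ω
          rw [hγγ] at this
          rw [one_mul, ← this, hRn, hγΩ]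
    rw [hrep, hrep, aux_norm_sq, aux_norm_sq]
    have h2 : ‖⟪Ω, π (star a * b) (z (R Ω))⟫_ℂ‖ ^ 2 ≤ ‖π a Ω‖ ^ 2 * ‖π b Ω‖ ^ 2 := by
      rw [← mul_pow]; gcongr
    exact_mod_cast h2

theorem aux_fwd {d : Dynamics A} {γ : A ≃⋆ₐ[ℂ] A} {β : ℝ} {ω : A → ℂ}
    {π : A →⋆ₐ[ℂ] (Hs →L[ℂ] Hs)} {Ω : Hs}
    (hcyc : Dense (Set.range fun a : A => π a Ω))
    (hdense : Dense {a : A | ∃ f, d.IsAnalyticExt a f})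
    (hK : AuxKMS d β (fun a => ⟪Ω, π a Ω⟫_ℂ))
    (hrep : ∀ a : A, ω a = ⟪Ω, π a Ω⟫_ℂ) (hω1 : ω 1 = 1)
    (hγγ : ∀ a, γ (γ a) = a)
    (hγΩ : ∀ a, ‖π (γ a) Ω‖ = ‖π a Ω‖)
    (u : ℕ → A) (hu_sa : ∀ n, star (u n) = u n) (hu_un : ∀ n, u n * u n = 1)
    (hu_dyn : ∀ n t, d.α t (u n) = u n) (hu_γ : ∀ n, γ (u n) = u n)
    (hγ : ∀ a, Tendsto (fun n => u n * a * u n) atTop (𝓝 (γ a)))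
    (R : Hs →L[ℂ] Hs) (hR : ∀ ξ, Tendsto (fun n => π (u n) ξ) atTop (𝓝 (R ξ)))
    (hRR : ∀ x, R (R x) = x) (hRn : ∀ x, ‖R x‖ = ‖x‖)
    (hRπ : ∀ a x, R (π a x) = π (γ a) (R x)) (hRM : R ∈ envVN π)
    (ρ' : A → ℂ) (hρ : TwistedKMSDom d γ β ω ρ') :
    ∃ z : Hs →L[ℂ] Hs, z ∈ envCenter π ∧ star z = z ∧ ‖z‖ ≤ 1 ∧
          ∀ a : A, ρ' a = ⟪Ω, π a (z (R Ω))⟫_ℂ := by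
  obtain ⟨⟨hlin, htw⟩, hherm, hdom⟩ := hρ
  have hdom' : ∀ a b, ‖ρ' (star a * b)‖ ≤ ‖π a Ω‖ * ‖π b Ω‖ := by
    intro a b
    have h1 := hdom a b
    rw [hrep, hrep, aux_norm_sq, aux_norm_sq] at h1
    have h2 : ‖ρ' (star a * b)‖ ^ 2 ≤ ‖π a Ω‖ ^ 2 * ‖π b Ω‖ ^ 2 := by exact_mod_cast h1
    rw [← mul_pow] at h2
    exact le_of_sq_le_sq h2 (by positivity)
  obtain ⟨τ, hτ⟩ : ∃ τ : Hs, ∀ a, ρ' a = ⟪τ, π a Ω⟫_ℂ := by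
    have hb : ∀ a, ‖hlin.mk' ρ' a‖ ≤ ‖Ω‖ * ‖auxE π Ω a‖ := by
      intro a
      have := hdom' 1 a
      simpa using! this
    have hd : DenseRange (auxE π Ω) := hcyc
    refine ⟨(InnerProductSpace.toDual ℂ Hs).symm ((hlin.mk' ρ').extendOfNorm (auxE π Ω)), fun a => ?_⟩
    rw [InnerProductSpace.toDual_symm_apply]
    exact (LinearMap.extendOfNorm_eq hd ⟨_, hb⟩ a).symm
  have hτ' : ∀ a, ρ' a = ⟪Ω, π a τ⟫_ℂ := by
    intro a
    have := hherm (star a)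
    rw [star_star] at this
    rw [this, hτ, inner_conj_symm, aux_adj]
  have hτb : ∀ b, ‖π b τ‖ ≤ ‖π b Ω‖ := by
    intro b
    have h1 : ∀ x, ‖⟪π b τ, x⟫_ℂ‖ ≤ ‖π b Ω‖ * ‖x‖ := by
      refine hcyc.induction (P := fun x => ‖⟪π b τ, x⟫_ℂ‖ ≤ ‖π b Ω‖ * ‖x‖) ?_
        (isClosed_le (by fun_prop) (by fun_prop))
      rintro _ ⟨a, rfl⟩
      have := hdom' b a
      rw [hτ, ← aux_pair] at this
      exact this
    have h2 := h1 (π b τ)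
    rw [inner_self_eq_norm_sq_to_K] at h2
    have h3 : ‖π b τ‖ ^ 2 ≤ ‖π b Ω‖ * ‖π b τ‖ := by simpa using h2
    by_contra! hlt
    nlinarith [norm_nonneg (π b Ω)]
  have hc := aux_cont π
  have hρc : Continuous ρ' := by
    have : ρ' = fun a => ⟪τ, π a Ω⟫_ℂ := funext hτ
    rw [this]; fun_prop
  have hγc : Continuous γ := (aux_isom γ).continuous
  have htw' : ∀ a b f, d.IsAnalyticExt b f → ρ' (a * f (Complex.I * β)) = ρ' (b * γ a) := by
    intro a b f hb
    have c1 : Continuous fun a => ρ' (a * f (Complex.I * β)) := by fun_prop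
    have c2 : Continuous fun a => ρ' (b * γ a) := by fun_prop
    refine congrFun (Continuous.ext_on hdense c1 c2 ?_) a
    rintro a ⟨g, hg⟩
    exact htw a b g f hg hb
  have s1 : ∀ a, ρ' (γ a) = ρ' a := by
    intro a
    have := htw' a 1 _ (aux_ext_const d (fun t => map_one _))
    simpa using this.symm
  have s3 : ∀ n a, ρ' (a * u n) = ρ' (u n * a) := by
    intro n a
    rw [htw' a (u n) _ (aux_ext_const d (hu_dyn n)), ← s1 (u n * a), map_mul, hu_γ]
  have s2 : ∀ a, Tendsto (fun n => ρ' (a * u n)) atTop (𝓝 ⟪Ω, π a (R τ)⟫_ℂ) := by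
    intro a
    have := (tendsto_const_nhds (x := Ω)).inner (𝕜 := ℂ)
      (aux_joint π (tendsto_const_nhds (x := a)) (hR τ))
    refine this.congr fun n => ?_
    rw [hτ', aux_mul]
  have hsym : ∀ a, ⟪Ω, π a (R τ)⟫_ℂ = ⟪R τ, π a Ω⟫_ℂ := by
    intro a
    refine tendsto_nhds_unique (s2 a) ?_
    refine ((hR τ).inner (𝕜 := ℂ) (tendsto_const_nhds (x := π a Ω))).congr fun n => ?_
    rw [s3, hτ, aux_pair, hu_sa]
  have hζ : AuxKMS d β (fun a => ⟪Ω, π a (R τ)⟫_ℂ) := by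
    intro a b f hb
    refine tendsto_nhds_unique (s2 _) ?_
    have := (tendsto_const_nhds (x := Ω)).inner (𝕜 := ℂ)
      (aux_joint π (tendsto_const_nhds (x := b)) (aux_joint π (hγ (γ a)) (hR τ)))
    rw [hγγ, ← aux_mul] at this
    refine this.congr fun n => ?_
    rw [s3, ← mul_assoc, htw' _ b f hb, (show γ (u n * a) = u n * γ a by rw [map_mul, hu_γ]), hτ', ← aux_mul, ← aux_mul]
    simp only [mul_assoc, hu_un, mul_one]
  have hbound : ∀ a, ‖π a (R τ)‖ ≤ 1 * ‖π a Ω‖ := by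
    intro a
    have := hRπ (γ a) τ
    rw [hγγ] at this
    rw [← this, hRn, one_mul, ← hγΩ]
    exact hτb _
  obtain ⟨z, hz1, hz2, hz3⟩ := aux_vec hcyc (R τ) 1 zero_le_one hbound
  obtain ⟨h1, h2⟩ := aux_central hcyc hdense hK (R τ) hζ hsym z hz2 hz3
  refine ⟨z, h1, h2, hz1, fun a => ?_⟩
  have h3 : z (R Ω) = R (z Ω) := congrArg (fun S : Hs →L[ℂ] Hs => S Ω) (h1.2 R hRM).symm
  have h4 : z Ω = R τ := by simpa using hz2 1
  rw [h3, h4, hRR, hτ']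

end helpers

/-- Suppose the graded C*-dynamical system `(A, α, γ)` with `γ`-invariant
`(α, β)`-KMS state `ω` (GNS triple `(H, π, Ω)`, `M = π(A)''`) contains a sequence `u_n`
of selfadjoint unitaries, invariant under dynamics and grading, with `ω(u_n u_m) → 1`
and `‖u_n a u_n − γ(a)‖ → 0` on a dense α-invariant *-subalgebra `A₀` of entire analytic
elements. Then `ρ(a) = lim_n ω(a u_n)` exists and is a hermitian `γ`-twisted
`(α, β)`-KMS functional dominated by `ω` (with `ρ(a) = ⟨Ω, π(a) R Ω⟩` for the strong
limit `R` of `π(u_n)`), and the family of all such functionals is exactly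
`{a ↦ ρ(a z) : z = z* ∈ Z(M), ‖z‖ ≤ 1}`. -/
theorem twisted_functionals_of_weakly_inner_grading
    {A : Type*} [CStarAlgebra A]
    {Hs : Type*} [NormedAddCommGroup Hs] [InnerProductSpace ℂ Hs] [CompleteSpace Hs]
    (S : GradedDyn A) (β : ℝ) (ω : A → ℂ)
    (hω : S.toDynamics.IsKMS β ω) (hinv : ∀ a, ω (S.γ a) = ω a)
    (π : A →⋆ₐ[ℂ] (Hs →L[ℂ] Hs)) (Ω : Hs)
    (hcyc : Dense (Set.range fun a : A => π a Ω))
    (hrep : ∀ a : A, ω a = ⟪Ω, π a Ω⟫_ℂ)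
    (u : ℕ → A)
    (hu_sa : ∀ n, star (u n) = u n) (hu_un : ∀ n, u n * u n = 1)
    (hu_dyn : ∀ n (t : ℝ), S.α t (u n) = u n) (hu_γ : ∀ n, S.γ (u n) = u n)
    (hu_lim : Filter.Tendsto (fun p : ℕ × ℕ => ω (u p.1 * u p.2))
      Filter.atTop (nhds 1))
    (A₀ : Subalgebra ℂ A)
    (hA₀_star : ∀ a ∈ A₀, star a ∈ A₀)
    (hA₀_dense : Dense (A₀ : Set A))
    (hA₀_inv : ∀ (t : ℝ), ∀ a ∈ A₀, S.α t a ∈ A₀)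
    (hA₀_an : ∀ a ∈ A₀, ∃ f : ℂ → A, S.toDynamics.IsAnalyticExt a f)
    (hA₀_approx : ∀ a ∈ A₀,
      Filter.Tendsto (fun n => ‖u n * a * u n - S.γ a‖) Filter.atTop (nhds 0)) :
    ∃ (ρ : A → ℂ) (R : Hs →L[ℂ] Hs),
      (∀ a : A, Filter.Tendsto (fun n => ω (a * u n)) Filter.atTop (nhds (ρ a))) ∧
      TwistedKMSDom S.toDynamics S.γ β ω ρ ∧
      (∀ ξ : Hs, Filter.Tendsto (fun n => π (u n) ξ) Filter.atTop (nhds (R ξ))) ∧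
      (∀ a : A, ρ a = ⟪Ω, π a (R Ω)⟫_ℂ) ∧
      ∀ ρ' : A → ℂ, TwistedKMSDom S.toDynamics S.γ β ω ρ' ↔
        ∃ z : Hs →L[ℂ] Hs, z ∈ envCenter π ∧ star z = z ∧ ‖z‖ ≤ 1 ∧
          ∀ a : A, ρ' a = ⟪Ω, π a (z (R Ω))⟫_ℂ := by
  classical
  obtain ⟨⟨hlin, hpos, hω1⟩, hkms⟩ := hω
  have hdense : Dense {a : A | ∃ f, S.toDynamics.IsAnalyticExt a f} :=
    hA₀_dense.mono fun a ha => hA₀_an a ha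
  have hc := aux_cont π
  have hωf : ω = fun a => ⟪Ω, π a Ω⟫_ℂ := funext hrep
  have hωc : Continuous ω := by rw [hωf]; fun_prop
  have hK : AuxKMS S.toDynamics β (fun a => ⟪Ω, π a Ω⟫_ℂ) := by
    rw [← hωf]
    intro a b f hb
    have c1 : Continuous fun a => ω (a * f (Complex.I * β)) := by fun_prop
    have c2 : Continuous fun a => ω (b * a) := by fun_prop
    refine congrFun (Continuous.ext_on hdense c1 c2 ?_) a
    rintro a ⟨g, hg⟩
    exact hkms a b g f hg hb
  have hnt : Nontrivial A := by
    refine nontrivial_of_ne (1 : A) 0 fun h => ?_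
    rw [h, hlin.map_zero] at hω1
    exact zero_ne_one hω1
  have hun : ∀ n, ‖u n‖ = 1 := fun n =>
    CStarRing.norm_of_mem_unitary (Unitary.mem_iff.2 ⟨by rw [hu_sa, hu_un], by rw [hu_sa, hu_un]⟩)
  have hγ : ∀ a, Filter.Tendsto (fun n => u n * a * u n) Filter.atTop (nhds (S.γ a)) := by
    intro a
    rw [Metric.tendsto_atTop]
    intro ε hε
    obtain ⟨b, hb, hab⟩ := hA₀_dense.exists_dist_lt a (show 0 < ε / 3 by positivity)
    have h1 := hA₀_approx b hb
    rw [Metric.tendsto_atTop] at h1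
    obtain ⟨N, hN⟩ := h1 (ε / 3) (by positivity)
    refine ⟨N, fun n hn => ?_⟩
    have h2 := hN n hn
    rw [dist_zero_right, norm_norm, ← dist_eq_norm] at h2
    have h3 : dist (u n * a * u n) (u n * b * u n) < ε / 3 := by
      rw [dist_eq_norm, ← sub_mul, ← mul_sub]
      refine lt_of_le_of_lt ((norm_mul_le _ _).trans (mul_le_mul_of_nonneg_right (norm_mul_le _ _)
        (norm_nonneg _))) ?_
      rw [hun, one_mul, mul_one, ← dist_eq_norm]
      exact hab
    have h4 : dist (S.γ b) (S.γ a) < ε / 3 := by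
      rw [(aux_isom S.γ).dist_eq, dist_comm]; exact hab
    have h5 := dist_triangle4 (u n * a * u n) (u n * b * u n) (S.γ b) (S.γ a)
    linarith
  have hγΩ : ∀ a, ‖π (S.γ a) Ω‖ = ‖π a Ω‖ := by
    intro a
    have h1 := aux_norm_sq π (S.γ a) Ω
    rw [← map_star, ← map_mul, ← hrep, hinv, hrep, aux_norm_sq] at h1
    have h2 : ‖π a Ω‖ ^ 2 = ‖π (S.γ a) Ω‖ ^ 2 := by exact_mod_cast h1
    exact ((pow_left_inj₀ (norm_nonneg _) (norm_nonneg _) two_ne_zero).1 h2).symm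
  simp only [hrep] at hu_lim
  obtain ⟨R, hR, hRR, hRin, hRn, hRπ, hRM⟩ :=
    aux_R (γ := S.γ) hcyc (by rw [← hrep, hω1]) u hu_sa hu_un hu_lim hγ
  have hRm : ∀ m ∈ envVN π, ⟪Ω, m (R Ω)⟫_ℂ = ⟪Ω, R (m Ω)⟫_ℂ := by
    intro m hm
    refine tendsto_nhds_unique ((tendsto_const_nhds (x := Ω)).inner (𝕜 := ℂ)
      ((m.continuous.tendsto _).comp (hR Ω))) ?_
    refine ((tendsto_const_nhds (x := Ω)).inner (𝕜 := ℂ) (hR (m Ω))).congr fun n => ?_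
    exact (aux_KMSM hcyc hK (aux_ext_const S.toDynamics (hu_dyn n)) hm).symm
  have hconv := aux_conv (d := S.toDynamics) (β := β) (ω := ω) hcyc hK hrep S.γ_invol hγΩ R hRn
    hRin hRπ hRM hRm
  refine ⟨fun a => ⟪Ω, π a (R Ω)⟫_ℂ, R, fun a => ?_, ?_, hR, fun a => rfl, fun ρ' => ⟨fun h => ?_, ?_⟩⟩
  · refine ((tendsto_const_nhds (x := Ω)).inner (𝕜 := ℂ)
      (aux_joint π (tendsto_const_nhds (x := a)) (hR Ω))).congr fun n => ?_
    rw [hrep, aux_mul]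
  · exact hconv 1 ⟨Set.one_mem_centralizer, Set.one_mem_centralizer⟩ (star_one _)
      ContinuousLinearMap.norm_id_le
  · exact aux_fwd hcyc hdense hK hrep hω1 S.γ_invol hγΩ u hu_sa hu_un hu_dyn hu_γ hγ R hR hRR hRn
      hRπ hRM ρ' h
  · rintro ⟨z, hz, hzs, hz1, hρ⟩
    rw [show ρ' = _ from funext hρ]
    exact hconv z hz hzs hz1

end
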